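/- Let G be a finite nonempty graph with distinct vertices a, b, c, and let G' be the graph obtained from G by adding three new vertices e, f, g together with the edges ef, fg, eg, ae, af, bf, bg, ce, cg (and no other new edges). If S is a connected dominating set of G, then G' has a connected dominating set of size |S| + 2. -/

import Mathlib

/-!
Besides `S`, the new set contains `e` and the vertex `a`, which is adjacent to `e` and is dominated
by `S`. If `a ∉ S`, then `S ∪ {a, e}` has the right size; if `a ∈ S`, then `S ∪ {e, f}` does.
In both cases the two vertices are attached one after the other to a set that is already
connected (`induce_insert_connected`), the vertices of `G` are dominated by `S`, and the
vertices of the triangle `efg` are dominated by `e`.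
-/

/-- `S` is a dominating set of `G`: every vertex is in `S` or adjacent to a vertex of `S`. -/
def IsDominatingSet {V : Type*} (G : SimpleGraph V) (S : Finset V) : Prop :=
  ∀ v : V, v ∈ S ∨ ∃ u ∈ S, G.Adj u v

/-- `S` is a connected dominating set of `G`: a dominating set inducing a connected subgraph. -/
def IsConnectedDominatingSet {V : Type*} (G : SimpleGraph V) (S : Finset V) : Prop :=
  IsDominatingSet G S ∧ (G.induce (S : Set V)).Connected

/-- The connected domination number of `G`. -/
noncomputable def connectedDominationNumber {V : Type*} (G : SimpleGraph V) : ℕ :=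
  sInf {n : ℕ | ∃ S : Finset V, IsConnectedDominatingSet G S ∧ S.card = n}
/-- The graph `G` extended by a triangle `e f g` (encoded as `Sum.inr 0`, `Sum.inr 1`,
`Sum.inr 2`) attached via the edges `ae, af, bf, bg, ce, cg`. -/
def extGraph {V : Type*} (G : SimpleGraph V) (a b c : V) : SimpleGraph (V ⊕ Fin 3) :=
  SimpleGraph.fromRel (fun x y =>
    match x, y with
    | Sum.inl u, Sum.inl u' => G.Adj u u'
    | Sum.inl u, Sum.inr i =>
        (u = a ∧ (i = 0 ∨ i = 1)) ∨ (u = b ∧ (i = 1 ∨ i = 2)) ∨ (u = c ∧ (i = 0 ∨ i = 2))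
    | Sum.inr _, Sum.inr _ => True
    | _, _ => False)

lemma induce_insert_connected {W : Type*} {H : SimpleGraph W} {s : Set W} {u v : W}
    (hs : (H.induce s).Connected) (hu : u ∈ s) (huv : H.Adj u v) :
    (H.induce (insert v s)).Connected := by
  have h := SimpleGraph.induce_union_connected hs.preconnected
    (SimpleGraph.induce_pair_connected_of_adj huv).preconnected ⟨u, hu, by simp⟩
  have e : s ∪ {u, v} = insert v s := by
    ext x
    simp only [Set.mem_union, Set.mem_insert_iff, Set.mem_singleton_iff]
    grind
  rwa [e] at h

lemma extGraph_adj_inl {V : Type*} {G : SimpleGraph V} {a b c u v : V} (h : G.Adj u v) :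
    (extGraph G a b c).Adj (Sum.inl u) (Sum.inl v) := by
  simp [extGraph, h, h.ne]

lemma extGraph_adj_inr {V : Type*} {G : SimpleGraph V} {a b c : V} {i j : Fin 3} (h : i ≠ j) :
    (extGraph G a b c).Adj (Sum.inr i) (Sum.inr j) := by
  simp [extGraph, h]

lemma extGraph_adj_a_e {V : Type*} {G : SimpleGraph V} {a b c : V} :
    (extGraph G a b c).Adj (Sum.inl a) (Sum.inr 0) := by
  simp [extGraph]

lemma induce_map_inl_connected {V : Type*} {G : SimpleGraph V} {a b c : V} {S : Finset V}
    (h : (G.induce (S : Set V)).Connected) :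
    ((extGraph G a b c).induce ((S.map .inl : Finset (V ⊕ Fin 3)) : Set (V ⊕ Fin 3))).Connected := by
  let φ : G.induce (S : Set V) →g
      (extGraph G a b c).induce ((S.map .inl : Finset (V ⊕ Fin 3)) : Set (V ⊕ Fin 3)) :=
    ⟨fun x => ⟨Sum.inl x.1, by simp⟩, fun {x y} h =>
      extGraph_adj_inl (a := a) (b := b) (c := c) (u := x.1) (v := y.1) h⟩
  refine h.map φ ?_
  rintro ⟨x, hx⟩
  obtain ⟨y, hy, rfl⟩ := Finset.mem_map.1 (Finset.mem_coe.1 hx)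
  exact ⟨⟨y, hy⟩, rfl⟩

lemma isDominatingSet_extGraph {V : Type*} {G : SimpleGraph V} {a b c : V} {S : Finset V}
    {T : Finset (V ⊕ Fin 3)} (hS : IsDominatingSet G S) (hST : S.map .inl ⊆ T)
    (he : Sum.inr 0 ∈ T) : IsDominatingSet (extGraph G a b c) T := by
  have hmem : ∀ u ∈ S, (Sum.inl u : V ⊕ Fin 3) ∈ T := fun u hu =>
    hST (Finset.mem_map_of_mem _ hu)
  rintro (v | i)
  · rcases hS v with h | ⟨u, hu, huv⟩
    · exact Or.inl (hmem v h)
    · exact Or.inr ⟨_, hmem u hu, extGraph_adj_inl huv⟩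
  · by_cases hi : i = 0
    · exact Or.inl (hi ▸ he)
    · exact Or.inr ⟨_, he, extGraph_adj_inr (Ne.symm hi)⟩

theorem stmt_10 {V : Type*} [Fintype V] [Nonempty V] [DecidableEq V] (G : SimpleGraph V)
    (a b c : V) (hab : a ≠ b) (hac : a ≠ c) (hbc : b ≠ c)
    (S : Finset V) (hS : IsConnectedDominatingSet G S) :
    ∃ S' : Finset (V ⊕ Fin 3),
      IsConnectedDominatingSet (extGraph G a b c) S' ∧ S'.card = S.card + 2 := by
  obtain ⟨hdom, hconn⟩ := hS
  have hconn' := induce_map_inl_connected (a := a) (b := b) (c := c) hconn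
  by_cases ha : a ∈ S
  · refine ⟨insert (Sum.inr 1) (insert (Sum.inr 0) (S.map .inl)),
      ⟨isDominatingSet_extGraph hdom (by grind) (by simp), ?_⟩, by simp⟩
    rw [Finset.coe_insert, Finset.coe_insert]
    exact induce_insert_connected
      (induce_insert_connected hconn' (by simpa using ha) extGraph_adj_a_e)
      (Set.mem_insert _ _) (extGraph_adj_inr (by decide))
  · obtain ⟨u, hu, hua⟩ := (hdom a).resolve_left ha
    refine ⟨insert (Sum.inr 0) (insert (Sum.inl a) (S.map .inl)),
      ⟨isDominatingSet_extGraph hdom (by grind) (by simp), ?_⟩, by simp [ha]⟩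
    rw [Finset.coe_insert, Finset.coe_insert]
    exact induce_insert_connected
      (induce_insert_connected hconn' (by simpa using hu) (extGraph_adj_inl hua))
      (Set.mem_insert _ _) extGraph_adj_a_e
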